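/- arXiv:1702.05702 — 4 statements merged into one kernel-verified Lean document; each statement's English description precedes it below -/
import Mathlib

section
/- Let X ⊆ ℝ^N be convex compact, let f : ℝ^N → ℝ be convex with a fixed subgradient selection ∇f, and suppose the curvature constant of f over X is at most C < ∞. Let x' ∈ X, γ ∈ (0,1], let z ∈ argmin_{z'∈X} ⟨∇f(x'), z'⟩, and set x'' = (1−γ)x' + γz. Then for every x ∈ X: f(x'') ≤ (1−γ) f(x') + γ f(x) + γ² C. -/
open Matrix Finset

section FrankWolfe

variable {𝕜 E : Type*} [CommRing 𝕜] [PartialOrder 𝕜] [AddCommGroup E] [Module 𝕜 E]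
  {f : E → 𝕜} {g : E → Module.Dual 𝕜 E} {φ : Module.Dual 𝕜 E} {X : Set E} {C : 𝕜} {x y z : E}

/-- `φ` is a subgradient at `x` of the restriction of `f` to `X`. Subgradients are encoded as linear
functionals, so that no inner product is needed. -/
def IsSubgradientWithinAt (f : E → 𝕜) (φ : Module.Dual 𝕜 E) (X : Set E) (x : E) : Prop :=
  ∀ y ∈ X, f x + φ (y - x) ≤ f y

/-- The curvature constant of `f` over `X`, with respect to the selection `g` of subgradients, is at
most `C`. The supremum is unfolded and the factor `α⁻²` cleared, so that an infinite curvature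
constant has no bound at all rather than a junk value. -/
def CurvatureLE (f : E → 𝕜) (g : E → Module.Dual 𝕜 E) (X : Set E) (C : 𝕜) : Prop :=
  ∀ x ∈ X, ∀ s ∈ X, ∀ α : 𝕜, 0 < α → α ≤ 1 →
    f ((1 - α) • x + α • s) - f x - α * g x (s - x) ≤ α ^ 2 * C

variable [IsOrderedRing 𝕜]

theorem IsSubgradientWithinAt.map_sub_le_of_isMinOn (hφ : IsSubgradientWithinAt f φ X x)
    (hz : IsMinOn φ X z) (hy : y ∈ X) : φ (z - x) ≤ f y - f x :=
  calc
    φ (z - x) = φ z - φ x := map_sub φ z x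
    _ ≤ φ y - φ x := sub_le_sub_right (hz hy) _
    _ = φ (y - x) := (map_sub φ y x).symm
    _ ≤ f y - f x := le_sub_iff_add_le'.mpr (hφ y hy)

theorem CurvatureLE.map_combo_le (hC : CurvatureLE f g X C) (hx : x ∈ X) (hz : z ∈ X)
    {γ : 𝕜} (hγ0 : 0 < γ) (hγ1 : γ ≤ 1) :
    f ((1 - γ) • x + γ • z) ≤ f x + γ * g x (z - x) + γ ^ 2 * C := by
  have h := hC x hx z hz γ hγ0 hγ1
  rwa [sub_sub, sub_le_iff_le_add'] at h

theorem frankWolfe_one_step_descent_general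
    (hg : ∀ u ∈ X, IsSubgradientWithinAt f (g u) X u) (hC : CurvatureLE f g X C)
    (hx : x ∈ X) {γ : 𝕜} (hγ0 : 0 < γ) (hγ1 : γ ≤ 1) (hz : z ∈ X) (hzmin : IsMinOn (g x) X z)
    (hy : y ∈ X) :
    f ((1 - γ) • x + γ • z) ≤ (1 - γ) * f x + γ * f y + γ ^ 2 * C :=
  calc
    f ((1 - γ) • x + γ • z) ≤ f x + γ * g x (z - x) + γ ^ 2 * C :=
      hC.map_combo_le hx hz hγ0 hγ1
    _ ≤ f x + γ * (f y - f x) + γ ^ 2 * C := by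
      gcongr
      exact (hg x hx).map_sub_le_of_isMinOn hzmin hy
    _ = (1 - γ) * f x + γ * f y + γ ^ 2 * C := by ring

end FrankWolfe

/-- one-step descent inequality for the Frank–Wolfe algorithm under a
curvature constant bound. -/
theorem frankWolfe_one_step_descent {N : ℕ}
    (X : Set (Fin N → ℝ)) (hXconv : Convex ℝ X) (hXcomp : IsCompact X)
    (f : (Fin N → ℝ) → ℝ) (hfconv : ConvexOn ℝ Set.univ f)
    (gf : (Fin N → ℝ) → (Fin N → ℝ))
    (hsub : ∀ u v : Fin N → ℝ, f u + (v - u) ⬝ᵥ gf u ≤ f v)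
    (C : ℝ)
    (hcurv : ∀ x ∈ X, ∀ s ∈ X, ∀ α : ℝ, 0 < α → α ≤ 1 →
      f ((1 - α) • x + α • s) - f x - α * ((s - x) ⬝ᵥ gf x) ≤ α ^ 2 * C)
    (x' : Fin N → ℝ) (hx' : x' ∈ X)
    (γ : ℝ) (hγ0 : 0 < γ) (hγ1 : γ ≤ 1)
    (z : Fin N → ℝ) (hzX : z ∈ X)
    (hzmin : ∀ w ∈ X, (gf x') ⬝ᵥ z ≤ (gf x') ⬝ᵥ w)
    (x'' : Fin N → ℝ) (hx'' : x'' = (1 - γ) • x' + γ • z) :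
    ∀ x ∈ X, f x'' ≤ (1 - γ) * f x' + γ * f x + γ ^ 2 * C := by
  let g : (Fin N → ℝ) → Module.Dual ℝ (Fin N → ℝ) := fun u ↦ dotProductEquiv ℝ (Fin N) (gf u)
  have hg : ∀ u ∈ X, IsSubgradientWithinAt f (g u) X u := fun u _ v _ ↦ by
    simpa only [g, dotProductEquiv_apply_apply, dotProduct_comm] using hsub u v
  have hC : CurvatureLE f g X C := by
    simpa only [g, CurvatureLE, dotProductEquiv_apply_apply, dotProduct_comm] using hcurv
  rw [hx'']
  exact fun x hx ↦ frankWolfe_one_step_descent_general hg hC hx' hγ0 hγ1 hzX hzmin hx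
end

section
/- Fix n > 2. Let 𝒜_1,…,𝒜_m ⊆ {1,…,n} be assortments with |𝒜_{j₀}| ≥ 2 for at least one j₀, N = Σ_{j=1}^m |𝒜_j|, and let X ⊆ ℝ^N be the ranking polytope. Let w_1,…,w_m > 0 and let p ∈ X satisfy p_{ij} > 0 for every pair i ∈ 𝒜_j. Define D(x) := Σ_{j=1}^m w_j Σ_{i∈𝒜_j} p_{ij} log(p_{ij}/x_{ij}) on vectors x with positive coordinates. Then the curvature constant of D over X is infinite: sup { α^{-2} ( D((1−α)x+αs) − D(x) − α⟨s−x, ∇D(x)⟩ ) : x, s ∈ X, α ∈ (0,1), all coordinates of x and of (1−α)x+αs positive } = +∞. -/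
/-!
For the weighted KL divergence, `D(z) - D(x) - ⟨z - x, ∇D(x)⟩` is the sum over all pairs of
`w_j p_{ij} (r - 1 - log r)` with `r = z_{ij} / x_{ij}`, and each summand is nonnegative. The
ranking polytope contains a point `u` with positive coordinates (the average of the vertices)
and, as soon as an assortment has two items, a vertex `v` with a vanishing coordinate. Fix `α`,
let `x = (1 - ε) v + ε u` and step from `x` towards `s = u`: at the vanishing coordinate of `v`
the ratio is `r = 1 - α + α / ε`, so the remainder tends to infinity as `ε → 0`.
-/

open scoped Classical

/-- The vertex of the ranking polytope associated with a ranking `σ`: for a pair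
`i ∈ 𝒜_j` (encoded as an element of the sigma type), the entry is `1` iff `i` is the
highest ranked (σ-smallest) item of the assortment `𝒜_j`. -/
noncomputable def rankVec {n m : ℕ} (A : Fin m → Finset (Fin n))
    (σ : Equiv.Perm (Fin n)) : ((j : Fin m) × {i : Fin n // i ∈ A j}) → ℝ :=
  fun idx => if ∀ i' ∈ A idx.1, σ idx.2.1 ≤ σ i' then 1 else 0

/-- The ranking polytope `X = conv { a(σ) : σ ∈ S_n }`. -/
noncomputable def rankPolytope {n m : ℕ} (A : Fin m → Finset (Fin n)) :
    Set (((j : Fin m) × {i : Fin n // i ∈ A j}) → ℝ) :=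
  convexHull ℝ {v | ∃ σ : Equiv.Perm (Fin n), v = rankVec A σ}

/-- The weighted sum of Kullback–Leibler divergences
`D(x) = Σ_j w_j Σ_{i ∈ 𝒜_j} p_{ij} log (p_{ij} / x_{ij})`. -/
noncomputable def wKL {n m : ℕ} {A : Fin m → Finset (Fin n)} (w : Fin m → ℝ)
    (p x : ((j : Fin m) × {i : Fin n // i ∈ A j}) → ℝ) : ℝ :=
  ∑ idx : (j : Fin m) × {i : Fin n // i ∈ A j},
    w idx.1 * (p idx * Real.log (p idx / x idx))

/-- The gradient of `wKL w p` at a point `x` with positive coordinates. -/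
noncomputable def wKLgrad {n m : ℕ} {A : Fin m → Finset (Fin n)} (w : Fin m → ℝ)
    (p x : ((j : Fin m) × {i : Fin n // i ∈ A j}) → ℝ) :
    ((j : Fin m) × {i : Fin n // i ∈ A j}) → ℝ :=
  fun idx => -(w idx.1 * p idx / x idx)

lemma one_sub_smul_add_smul_pos {ι : Type*} {a b : ι → ℝ} {t : ℝ} (ha : ∀ i, 0 ≤ a i)
    (hb : ∀ i, 0 < b i) (ht₀ : 0 < t) (ht₁ : t ≤ 1) (i : ι) : 0 < ((1 - t) • a + t • b) i :=
  add_pos_of_nonneg_of_pos (mul_nonneg (sub_nonneg.mpr ht₁) (ha i)) (mul_pos ht₀ (hb i))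

section ItakuraSaito

open Filter Topology

variable {ι : Type*} [Fintype ι] {c u v x z : ι → ℝ} {α : ℝ}

/-- The Itakura–Saito divergence of `z` from `x` with weights `c`, i.e. the Bregman divergence of
`x ↦ -∑ i, c i * log (x i)`; it is meant for `z` and `x` with positive coordinates. -/
noncomputable def itakuraSaito (c z x : ι → ℝ) : ℝ :=
  ∑ i, c i * (z i / x i - 1 - Real.log (z i / x i))

lemma tendsto_sub_one_sub_log_atTop :
    Tendsto (fun r : ℝ => r - 1 - Real.log r) atTop atTop := by
  have hhalf : Tendsto (fun r : ℝ => r / 2 - 1) atTop atTop :=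
    tendsto_atTop_add_const_right _ _ (tendsto_id.atTop_div_const two_pos)
  refine tendsto_atTop_mono' _ ?_ hhalf
  filter_upwards [eventually_gt_atTop 0] with r hr
  have hlog_half : Real.log r - Real.log 2 ≤ r / 2 - 1 := by
    rw [← Real.log_div hr.ne' two_ne_zero]
    exact Real.log_le_sub_one_of_pos (half_pos hr)
  have hlog_two : Real.log 2 ≤ 2 - 1 := Real.log_le_sub_one_of_pos two_pos
  linarith

lemma mul_le_itakuraSaito (hc : ∀ i, 0 ≤ c i) (hx : ∀ i, 0 < x i) (hz : ∀ i, 0 < z i) (k : ι) :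
    c k * (z k / x k - 1 - Real.log (z k / x k)) ≤ itakuraSaito c z x :=
  Finset.single_le_sum (f := fun i => c i * (z i / x i - 1 - Real.log (z i / x i)))
    (fun i _ => mul_nonneg (hc i) <|
      sub_nonneg.mpr (Real.log_le_sub_one_of_pos (div_pos (hz i) (hx i))))
    (Finset.mem_univ k)

lemma tendsto_itakuraSaito_atTop (hc : ∀ i, 0 ≤ c i) (hu : ∀ i, 0 < u i) (hv : ∀ i, 0 ≤ v i)
    {k : ι} (hck : 0 < c k) (hvk : v k = 0) (hα₀ : 0 < α) (hα₁ : α ≤ 1) :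
    Tendsto
      (fun ε : ℝ => itakuraSaito c ((1 - α) • ((1 - ε) • v + ε • u) + α • u) ((1 - ε) • v + ε • u))
      (𝓝[>] 0) atTop := by
  have hratio : Tendsto (fun ε : ℝ => (1 - α) + α * ε⁻¹) (𝓝[>] 0) atTop :=
    tendsto_atTop_add_const_left _ _ (tendsto_inv_nhdsGT_zero.const_mul_atTop hα₀)
  refine tendsto_atTop_mono' _ ?_
    ((tendsto_sub_one_sub_log_atTop.comp hratio).const_mul_atTop hck)
  filter_upwards [Ioo_mem_nhdsGT one_pos] with ε hε
  have hx := one_sub_smul_add_smul_pos hv hu hε.1 hε.2.le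
  have hz := one_sub_smul_add_smul_pos (fun i => (hx i).le) hu hα₀ hα₁
  have hratio_k : ((1 - α) • ((1 - ε) • v + ε • u) + α • u) k / ((1 - ε) • v + ε • u) k
      = (1 - α) + α * ε⁻¹ := by
    have huk := (hu k).ne'
    have hε₀ := hε.1.ne'
    simp only [Pi.add_apply, Pi.smul_apply, smul_eq_mul, hvk]
    field_simp
    ring
  simpa only [Function.comp_apply, hratio_k] using mul_le_itakuraSaito hc hx hz k

lemma exists_lt_itakuraSaito_of_convex {X : Set (ι → ℝ)} (hX : Convex ℝ X) (huX : u ∈ X)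
    (hvX : v ∈ X) (hc : ∀ i, 0 ≤ c i) (hu : ∀ i, 0 < u i) (hv : ∀ i, 0 ≤ v i) {k : ι}
    (hck : 0 < c k) (hvk : v k = 0) (hα₀ : 0 < α) (hα₁ : α ≤ 1) (C : ℝ) :
    ∃ x ∈ X, (∀ i, 0 < x i) ∧ C < itakuraSaito c ((1 - α) • x + α • u) x := by
  have hlim := tendsto_itakuraSaito_atTop hc hu hv hck hvk hα₀ hα₁
  obtain ⟨ε, hC, hε₀, hε₁⟩ :=
    ((hlim.eventually_gt_atTop C).and (Ioo_mem_nhdsGT one_pos)).exists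
  exact ⟨(1 - ε) • v + ε • u,
    hX hvX huX (sub_nonneg.mpr hε₁.le) hε₀.le (sub_add_cancel 1 ε),
    one_sub_smul_add_smul_pos hv hu hε₀ hε₁.le, hC⟩

end ItakuraSaito

section RankPolytope

variable {n m : ℕ} {A : Fin m → Finset (Fin n)}

lemma exists_perm_forall_le (i : Fin n) : ∃ σ : Equiv.Perm (Fin n), ∀ i', σ i ≤ σ i' := by
  have : NeZero n := ⟨i.pos.ne'⟩
  exact ⟨Equiv.swap i 0, fun i' => (Equiv.swap_apply_left i 0).trans_le (Fin.zero_le _)⟩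

lemma exists_rankVec_eq_one (k : (j : Fin m) × {i : Fin n // i ∈ A j}) :
    ∃ σ, rankVec A σ k = 1 := by
  obtain ⟨σ, hσ⟩ := exists_perm_forall_le k.2.1
  exact ⟨σ, if_pos fun i' _ => hσ i'⟩

lemma exists_rankVec_eq_zero {k : (j : Fin m) × {i : Fin n // i ∈ A j}}
    (hk : 2 ≤ (A k.1).card) : ∃ σ, rankVec A σ k = 0 := by
  obtain ⟨b, hb, hbk⟩ := Finset.exists_mem_ne hk k.2.1
  obtain ⟨σ, hσ⟩ := exists_perm_forall_le b
  exact ⟨σ, if_neg fun hfirst => hbk (σ.injective ((hσ _).antisymm (hfirst b hb)))⟩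

lemma rankVec_nonneg (σ : Equiv.Perm (Fin n)) (k : (j : Fin m) × {i : Fin n // i ∈ A j}) :
    0 ≤ rankVec A σ k := by
  unfold rankVec
  split_ifs <;> norm_num

variable (A)

lemma rankVec_mem_rankPolytope (σ : Equiv.Perm (Fin n)) : rankVec A σ ∈ rankPolytope A :=
  subset_convexHull ℝ _ ⟨σ, rfl⟩

lemma convex_rankPolytope : Convex ℝ (rankPolytope A) :=
  convex_convexHull ℝ _

lemma exists_pos_mem_rankPolytope : ∃ u ∈ rankPolytope A, ∀ k, 0 < u k := by
  have hcard : 0 < (Fintype.card (Equiv.Perm (Fin n)) : ℝ)⁻¹ := by positivity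
  refine ⟨∑ σ, (Fintype.card (Equiv.Perm (Fin n)) : ℝ)⁻¹ • rankVec A σ, ?_, fun k => ?_⟩
  · refine (convex_rankPolytope A).sum_mem (fun _ _ => hcard.le) ?_
      fun σ _ => rankVec_mem_rankPolytope A σ
    rw [Finset.sum_const, nsmul_eq_mul, Finset.card_univ]
    exact mul_inv_cancel₀ (inv_pos.mp hcard).ne'
  · obtain ⟨σ, hσ⟩ := exists_rankVec_eq_one k
    simp only [Finset.sum_apply, Pi.smul_apply, smul_eq_mul]
    refine Finset.sum_pos' (fun τ _ => mul_nonneg hcard.le (rankVec_nonneg τ k))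
      ⟨σ, Finset.mem_univ σ, ?_⟩
    rwa [hσ, mul_one]

end RankPolytope

section WeightedKL

variable {n m : ℕ} {A : Fin m → Finset (Fin n)} {w : Fin m → ℝ}
  {p x z s : ((j : Fin m) × {i : Fin n // i ∈ A j}) → ℝ}

lemma wKL_bregman_eq_itakuraSaito (hx : ∀ k, x k ≠ 0) (hz : ∀ k, z k ≠ 0) :
    wKL w p z - wKL w p x - ∑ k, (z k - x k) * wKLgrad w p x k
      = itakuraSaito (fun k => w k.1 * p k) z x := by
  unfold wKL wKLgrad itakuraSaito
  rw [← Finset.sum_sub_distrib, ← Finset.sum_sub_distrib]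
  refine Finset.sum_congr rfl fun k _ => ?_
  rcases eq_or_ne (p k) 0 with hp | hp
  · simp [hp]
  · rw [Real.log_div hp (hz k), Real.log_div hp (hx k), Real.log_div (hz k) (hx k)]
    have hxk := hx k
    field_simp
    ring

lemma wKL_remainder_eq_itakuraSaito {α : ℝ} (hx : ∀ k, x k ≠ 0)
    (hz : ∀ k, ((1 - α) • x + α • s) k ≠ 0) :
    wKL w p ((1 - α) • x + α • s) - wKL w p x - α * ∑ k, (s k - x k) * wKLgrad w p x k
      = itakuraSaito (fun k => w k.1 * p k) ((1 - α) • x + α • s) x := by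
  rw [← wKL_bregman_eq_itakuraSaito hx hz, Finset.mul_sum]
  congr 1
  refine Finset.sum_congr rfl fun k _ => ?_
  simp only [Pi.add_apply, Pi.smul_apply, smul_eq_mul]
  ring

theorem wKL_infinite_curvature_general (hw : ∀ j, 0 ≤ w j) (hp : ∀ k, 0 ≤ p k)
    {k : (j : Fin m) × {i : Fin n // i ∈ A j}} (hk : 2 ≤ (A k.1).card)
    (hwk : 0 < w k.1) (hpk : 0 < p k) {α : ℝ} (hα₀ : 0 < α) (hα₁ : α ≤ 1) (C : ℝ) :
    ∃ x ∈ rankPolytope A, ∃ s ∈ rankPolytope A,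
      (∀ idx, 0 < x idx) ∧ (∀ idx, 0 < ((1 - α) • x + α • s) idx) ∧
      C < (1 / α ^ 2) *
        (wKL w p ((1 - α) • x + α • s) - wKL w p x
          - α * ∑ idx, (s idx - x idx) * wKLgrad w p x idx) := by
  obtain ⟨u, huX, hu⟩ := exists_pos_mem_rankPolytope A
  obtain ⟨σ, hσ⟩ := exists_rankVec_eq_zero hk
  obtain ⟨x, hxX, hx, hC⟩ := exists_lt_itakuraSaito_of_convex (c := fun k => w k.1 * p k)
    (convex_rankPolytope A) huX (rankVec_mem_rankPolytope A σ)
    (fun k => mul_nonneg (hw k.1) (hp k)) hu (rankVec_nonneg σ) (mul_pos hwk hpk) hσ hα₀ hα₁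
    (α ^ 2 * C)
  have hz := one_sub_smul_add_smul_pos (fun k => (hx k).le) hu hα₀ hα₁
  refine ⟨x, hxX, u, huX, hx, hz, ?_⟩
  rwa [wKL_remainder_eq_itakuraSaito (fun k => (hx k).ne') fun k => (hz k).ne',
    one_div_mul_eq_div, lt_div_iff₀' (pow_pos hα₀ 2)]

end WeightedKL

/-- for `n > 2`, positive weights and a point `p` of the ranking polytope
with positive coordinates, the weighted KL-divergence distance has infinite curvature
constant over the ranking polytope (the supremum being taken over the points where the
divergence is defined, i.e., with positive coordinates). -/
theorem wKL_infinite_curvature {n m : ℕ} (hn : 2 < n)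
    (A : Fin m → Finset (Fin n)) (hA : ∃ j₀ : Fin m, 2 ≤ (A j₀).card)
    (w : Fin m → ℝ) (hw : ∀ j, 0 < w j)
    (p : ((j : Fin m) × {i : Fin n // i ∈ A j}) → ℝ)
    (hpX : p ∈ rankPolytope A) (hppos : ∀ idx, 0 < p idx) :
    ∀ Cbound : ℝ, ∃ x ∈ rankPolytope A, ∃ s ∈ rankPolytope A, ∃ α : ℝ,
      0 < α ∧ α < 1 ∧ (∀ idx, 0 < x idx) ∧ (∀ idx, 0 < ((1 - α) • x + α • s) idx) ∧
      Cbound < (1 / α ^ 2) *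
        (wKL w p ((1 - α) • x + α • s) - wKL w p x
          - α * ∑ idx, (s idx - x idx) * wKLgrad w p x idx) := by
  intro C
  obtain ⟨j₀, hj₀⟩ := hA
  obtain ⟨i, hi⟩ := Finset.card_pos.mp (two_pos.trans_le hj₀)
  obtain ⟨x, hxX, s, hsX, h⟩ := wKL_infinite_curvature_general (k := ⟨j₀, i, hi⟩)
    (fun j => (hw j).le) (fun idx => (hppos idx).le) hj₀ (hw j₀) (hppos _) one_half_pos
    one_half_lt_one.le C
  exact ⟨x, hxX, s, hsX, 1 / 2, one_half_pos, one_half_lt_one, h⟩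
end

section
/- Let ‖·‖ be a norm on ℝ^N with dual norm ‖·‖_*, let f : ℝ^N → ℝ be convex and differentiable with L-Lipschitz gradient, i.e., ‖∇f(u) − ∇f(v)‖_* ≤ L‖u − v‖ for all u, v, and let X ⊆ ℝ^N be convex and compact with diameter R = max_{x,x'∈X} ‖x − x'‖. Then the curvature constant of f over X satisfies C_f ≤ L R². -/
/-!
Put `d = y - x`. The derivative of `t ↦ f (x + t d)` exceeds its value at `t = 0` by
`(f' (x + t d) - f' x) d`, which duality and the Lipschitz bound make at most `L t ‖d‖²`.
Integrating over `[0, 1]` bounds the linearization error `f y - f x - f' x d` by `(L / 2) ‖d‖²`,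
and for `y = (1 - α) x + α s` homogeneity gives `‖d‖² = α² ‖s - x‖²`.
-/

open scoped RealInnerProductSpace

section DualNorm

variable {E : Type*} [AddCommGroup E] [Module ℝ E]

/-- The dual norm of a linear functional `φ` with respect to `p`, namely the supremum of `φ` over
the unit ball of `p`. As a real supremum it takes the junk value `0` when `φ` is unbounded there. -/
noncomputable def dualNorm (p : Seminorm ℝ E) (φ : Module.Dual ℝ E) : ℝ :=
  sSup {r : ℝ | ∃ w, p w ≤ 1 ∧ r = φ w}

-- `E` carries no topology here, so `p` itself can be installed as its norm.
lemma exists_abs_apply_le_mul_seminorm [FiniteDimensional ℝ E] {p : Seminorm ℝ E}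
    (hp : ∀ u, p u = 0 → u = 0) (φ : Module.Dual ℝ E) :
    ∃ C, 0 ≤ C ∧ ∀ w, |φ w| ≤ C * p w := by
  let _ : Norm E := ⟨p⟩
  have core : NormedSpace.Core ℝ E :=
    { norm_nonneg := apply_nonneg p
      norm_smul := map_smul_eq_mul p
      norm_triangle := map_add_le_add p
      norm_eq_zero_iff u := ⟨hp u, fun hu ↦ hu ▸ map_zero p⟩ }
  let _ : NormedAddCommGroup E := .ofCore core
  let _ : NormedSpace ℝ E := .ofCore core
  exact ⟨‖φ.toContinuousLinearMap‖, norm_nonneg _, φ.toContinuousLinearMap.le_opNorm⟩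

lemma bddAbove_apply_unitBall [FiniteDimensional ℝ E] {p : Seminorm ℝ E}
    (hp : ∀ u, p u = 0 → u = 0) (φ : Module.Dual ℝ E) :
    BddAbove {r : ℝ | ∃ w, p w ≤ 1 ∧ r = φ w} := by
  obtain ⟨C, hC, hφ⟩ := exists_abs_apply_le_mul_seminorm hp φ
  refine ⟨C, ?_⟩
  rintro _ ⟨w, hw, rfl⟩
  exact (le_abs_self _).trans ((hφ w).trans (mul_le_of_le_one_right hC hw))

lemma apply_le_dualNorm_mul [FiniteDimensional ℝ E] {p : Seminorm ℝ E}
    (hp : ∀ u, p u = 0 → u = 0) (φ : Module.Dual ℝ E) (d : E) :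
    φ d ≤ dualNorm p φ * p d := by
  obtain hd | hd := (apply_nonneg p d).eq_or_lt'
  · simp [hp d hd]
  · have hunit : p ((p d)⁻¹ • d) ≤ 1 := by
      rw [map_smul_eq_mul, norm_inv, Real.norm_of_nonneg hd.le, inv_mul_cancel₀ hd.ne']
    have hle : φ ((p d)⁻¹ • d) ≤ dualNorm p φ :=
      le_csSup (bddAbove_apply_unitBall hp φ) ⟨_, hunit, rfl⟩
    rwa [map_smul, smul_eq_mul, inv_mul_le_iff₀' hd] at hle

end DualNorm

lemma dualNorm_toDual {E : Type*} [NormedAddCommGroup E] [InnerProductSpace ℝ E] [CompleteSpace E]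
    (p : Seminorm ℝ E) (g : E) :
    dualNorm p (InnerProductSpace.toDual ℝ E g) = sSup {r : ℝ | ∃ w, p w ≤ 1 ∧ r = ⟪w, g⟫} := by
  simp [dualNorm, real_inner_comm]

lemma image_le_add_mul_add_sq_of_deriv_le {g g' : ℝ → ℝ} {a b m c : ℝ} (hab : a ≤ b)
    (hg : ∀ t ∈ Set.Icc a b, HasDerivWithinAt g (g' t) (Set.Icc a b) t)
    (hg' : ∀ t ∈ Set.Ico a b, g' t ≤ m + c * (t - a)) :
    g b ≤ g a + m * (b - a) + c / 2 * (b - a) ^ 2 := by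
  have hB (t : ℝ) : HasDerivAt (fun t ↦ g a + m * (t - a) + c / 2 * (t - a) ^ 2)
      (m + c * (t - a)) t := by
    have hsub : HasDerivAt (fun t ↦ t - a) 1 t := (hasDerivAt_id t).sub_const a
    have hsq : HasDerivAt (fun t ↦ (t - a) ^ 2) (2 * (t - a)) t := by
      simpa using hsub.fun_pow 2
    exact (((hsub.const_mul m).const_add (g a)).add (hsq.const_mul (c / 2))).congr_deriv (by ring)
  exact image_le_of_deriv_right_le_deriv_boundary (fun t ht ↦ (hg t ht).continuousWithinAt)
    (fun t ht ↦ (hg t (Set.Ico_subset_Icc_self ht)).mono_of_mem_nhdsWithin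
      (Icc_mem_nhdsGE_of_mem ht))
    (by simp) (fun t _ ↦ (hB t).continuousAt.continuousWithinAt)
    (fun t _ ↦ (hB t).hasDerivWithinAt) hg' (Set.right_mem_Icc.2 hab)

section LinearizationError

variable {E : Type*} [NormedAddCommGroup E] [NormedSpace ℝ E] {f : E → ℝ}
  {f' : E → StrongDual ℝ E} {p : Seminorm ℝ E} {L : ℝ}

lemma sub_sub_fderiv_le_of_segment {x y : E}
    (hf : ∀ u ∈ segment ℝ x y, HasFDerivWithinAt f (f' u) (segment ℝ x y) u)
    (hLip : ∀ u ∈ segment ℝ x y, (f' u - f' x) (y - x) ≤ L * p (u - x) * p (y - x)) :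
    f y - f x - f' x (y - x) ≤ L / 2 * p (y - x) ^ 2 := by
  let γ : ℝ → E := AffineMap.lineMap x y
  have hγ : Set.MapsTo γ (Set.Icc 0 1) (segment ℝ x y) := by
    rw [segment_eq_image_lineMap]
    exact Set.mapsTo_image _ _
  have hderiv (t : ℝ) (ht : t ∈ Set.Icc 0 1) :
      HasDerivWithinAt (f ∘ γ) (f' (γ t) (y - x)) (Set.Icc 0 1) t :=
    (hf _ (hγ ht)).comp_hasDerivWithinAt t AffineMap.hasDerivWithinAt_lineMap hγ
  have hgrowth (t : ℝ) (ht : t ∈ Set.Ico 0 1) :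
      f' (γ t) (y - x) ≤ f' x (y - x) + L * p (y - x) ^ 2 * (t - 0) := by
    have hγt : p (γ t - x) = t * p (y - x) := by
      simp only [γ, AffineMap.lineMap_apply_module', add_sub_cancel_right, map_smul_eq_mul,
        Real.norm_of_nonneg ht.1]
    have hincr := hLip _ (hγ (Set.Ico_subset_Icc_self ht))
    rw [hγt, sub_apply] at hincr
    linarith
  have hquad := image_le_add_mul_add_sq_of_deriv_le zero_le_one hderiv hgrowth
  simp only [γ, Function.comp_apply, AffineMap.lineMap_apply_zero,
    AffineMap.lineMap_apply_one] at hquad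
  linarith

theorem curvature_le_of_lipschitz_gradient_general [FiniteDimensional ℝ E]
    (hp : ∀ u, p u = 0 → u = 0) {X : Set E} (hX : Convex ℝ X)
    (hf : ∀ u ∈ X, HasFDerivWithinAt f (f' u) X u) (hL : 0 ≤ L)
    (hLip : ∀ u ∈ X, ∀ v ∈ X, dualNorm p (f' u - f' v : StrongDual ℝ E) ≤ L * p (u - v))
    {R : ℝ} (hR : ∀ x ∈ X, ∀ s ∈ X, p (s - x) ≤ R) :
    ∀ x ∈ X, ∀ s ∈ X, ∀ α : ℝ, 0 ≤ α → α ≤ 1 →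
      f ((1 - α) • x + α • s) - f x - α * f' x (s - x) ≤ α ^ 2 * (L / 2 * R ^ 2) := by
  intro x hx s hs α hα hα1
  set y := (1 - α) • x + α • s with hy
  have hyX : y ∈ X := hX hx hs (sub_nonneg.2 hα1) hα (sub_add_cancel 1 α)
  have hyx : y - x = α • (s - x) := by
    rw [hy]
    module
  have hseg : segment ℝ x y ⊆ X := hX.segment_subset hx hyX
  have herror : f y - f x - f' x (y - x) ≤ L / 2 * p (y - x) ^ 2 :=
    sub_sub_fderiv_le_of_segment (fun u hu ↦ (hf u (hseg hu)).mono hseg) fun u hu ↦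
      (apply_le_dualNorm_mul hp _ _).trans <|
        mul_le_mul_of_nonneg_right (hLip u (hseg hu) x hx) (apply_nonneg p _)
  calc f y - f x - α * f' x (s - x)
      = f y - f x - f' x (y - x) := by rw [hyx, map_smul, smul_eq_mul]
    _ ≤ L / 2 * p (y - x) ^ 2 := herror
    _ = α ^ 2 * (L / 2 * p (s - x) ^ 2) := by
      rw [hyx, map_smul_eq_mul, Real.norm_of_nonneg hα]
      ring
    _ ≤ α ^ 2 * (L / 2 * R ^ 2) := by
      gcongr
      exact hR x hx s hs

end LinearizationError

/-- a convex differentiable function with `L`-Lipschitz gradient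
(measured in an arbitrary norm `nrm` and its dual norm) has curvature constant over a
convex compact set `X` of diameter `R` bounded by `L R²`. -/
theorem curvature_le_of_lipschitz_gradient {N : ℕ}
    (nrm : EuclideanSpace ℝ (Fin N) → ℝ)
    (hnonneg : ∀ u, 0 ≤ nrm u)
    (hdefinite : ∀ u, nrm u = 0 → u = 0)
    (hhom : ∀ (c : ℝ) u, nrm (c • u) = |c| * nrm u)
    (htri : ∀ u v, nrm (u + v) ≤ nrm u + nrm v)
    (f : EuclideanSpace ℝ (Fin N) → ℝ) (hfconv : ConvexOn ℝ Set.univ f)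
    (gradf : EuclideanSpace ℝ (Fin N) → EuclideanSpace ℝ (Fin N))
    (hgrad : ∀ u, HasGradientAt f (gradf u) u)
    (L : ℝ) (hL : 0 ≤ L)
    (hLip : ∀ u v, sSup {r : ℝ | ∃ w, nrm w ≤ 1 ∧ r = ⟪w, gradf u - gradf v⟫}
      ≤ L * nrm (u - v))
    (X : Set (EuclideanSpace ℝ (Fin N))) (hXconv : Convex ℝ X) (hXcomp : IsCompact X)
    (R : ℝ) (hR : IsGreatest {r : ℝ | ∃ x ∈ X, ∃ x' ∈ X, r = nrm (x - x')} R) :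
    ∀ x ∈ X, ∀ s ∈ X, ∀ α : ℝ, 0 < α → α ≤ 1 →
      f ((1 - α) • x + α • s) - f x - α * ⟪s - x, gradf x⟫ ≤ α ^ 2 * (L * R ^ 2) := by
  intro x hx s hs α hα hα1
  have hcurv := curvature_le_of_lipschitz_gradient_general (p := .of nrm htri hhom) hdefinite
    hXconv (fun u _ ↦ (hgrad u).hasFDerivAt.hasFDerivWithinAt) hL
    (fun u _ v _ ↦ by
      rw [← map_sub, dualNorm_toDual]
      exact hLip u v)
    (fun x hx s hs ↦ hR.2 ⟨s, hs, x, hx, rfl⟩) x hx s hs α hα.le hα1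
  rw [InnerProductSpace.toDual_apply_apply, real_inner_comm] at hcurv
  refine hcurv.trans ?_
  gcongr
  exact half_le_self hL
end

section
/- Let X ⊆ ℝ^N be convex compact, ‖·‖ a norm on ℝ^N, G > 0, and Y = { y ∈ ℝ^N : ‖y‖ ≤ G }. For each data vector p' let D(·,p') : ℝ^N → ℝ be convex, and let D_*(y,p') := sup_{z∈ℝ^N} ( ⟨y,z⟩ − D(z,p') ) be its convex conjugate. Assume: (i) D(x,p) = sup_{y∈Y} ( ⟨x,y⟩ − D_*(y,p) ) for all x ∈ X; and (ii) there exist constants L_D, L_{D,*} ∈ [0,∞) such that min_{x∈X} D(x,p') − min_{x∈X} D(x,p'') ≤ L_D·D(p',p'') for all p',p'', and D_*(y,p') − D_*(y,p'') ≤ L_{D,*}·D(p',p'') for all y ∈ Y and all p',p''. Given a sequence y^1,…,y^T ∈ Y and data p^1,…,p^T, define z^t ∈ argmin_{z∈X} ⟨z, y^t⟩, f^t(y) := ⟨z^t, y⟩ − D_*(y,p^t), and x^T := (1/T) Σ_{t=1}^T z^t. Then: D(x^T, p) − min_{x∈X} D(x,p) ≤ max_{y∈Y} (1/T) Σ_{t=1}^T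 f^t(y) − (1/T) Σ_{t=1}^T f^t(y^t) + ((L_D + L_{D,*})/T) Σ_{t=1}^T D(p^t, p). -/
/-!
Each round, `f^t(y^t) ≤ min_X D(·, p^t)`: since `z^t` minimizes `⟨·, y^t⟩` over `X`, the
Fenchel–Young inequality gives `⟨z^t, y^t⟩ - D_*(y^t, p^t) ≤ D(x, p^t)` for every `x ∈ X`.
Conversely, `y ↦ ⟨x^T, y⟩ - D_*(y, p)` has supremum `D(x^T, p)` and, by linearity in the first
slot, is the average of the `f^t(y)` up to replacing `p` by `p^t` in the conjugate. Replacing `p^t`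
by `p` costs `L_D D(p^t, p)` in the first estimate and `L_{D,*} D(p^t, p)` in the second.
-/

open Matrix Finset

theorem setOf_exists_and_eq {α β : Type*} (P : α → Prop) (f : α → β) :
    {b | ∃ a, P a ∧ b = f a} = f '' {a | P a} := by
  simp only [Set.image, Set.mem_ofPred_eq, eq_comm]

section WeightedSums

variable {ι F : Type*} {s : Finset ι} {w : ι → ℝ}

theorem sum_mul_le_sum_mul_add_mul_sum {a b d : ι → ℝ} {L : ℝ} (hw : ∀ t ∈ s, 0 ≤ w t)
    (h : ∀ t ∈ s, a t ≤ b t + L * d t) :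
    ∑ t ∈ s, w t * a t ≤ ∑ t ∈ s, w t * b t + L * ∑ t ∈ s, w t * d t := by
  calc ∑ t ∈ s, w t * a t
      ≤ ∑ t ∈ s, w t * (b t + L * d t) :=
        sum_le_sum fun t ht ↦ mul_le_mul_of_nonneg_left (h t ht) (hw t ht)
    _ = ∑ t ∈ s, w t * b t + L * ∑ t ∈ s, w t * d t := by
        simp only [mul_add, mul_left_comm, sum_add_distrib, mul_sum]

theorem bddAbove_image_sum_mul {Y : Set F} {f : ι → F → ℝ} {b : ι → ℝ}
    (hw : ∀ t ∈ s, 0 ≤ w t) (h : ∀ y ∈ Y, ∀ t ∈ s, f t y ≤ b t) :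
    BddAbove ((fun y ↦ ∑ t ∈ s, w t * f t y) '' Y) :=
  ⟨∑ t ∈ s, w t * b t, Set.forall_mem_image.2 fun y hy ↦
    sum_le_sum fun t ht ↦ mul_le_mul_of_nonneg_left (h y hy t ht) (hw t ht)⟩

theorem dual_sum_smul_sub {E : Type*} [AddCommMonoid E] [Module ℝ E] (φ : Module.Dual ℝ E)
    (z : ι → E) (c : ℝ) (hw : ∑ t ∈ s, w t = 1) :
    φ (∑ t ∈ s, w t • z t) - c = ∑ t ∈ s, w t * (φ (z t) - c) := by
  simp only [map_sum, map_smul, smul_eq_mul, mul_sub, sum_sub_distrib, ← sum_mul, hw, one_mul]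

end WeightedSums

theorem fenchel_young {E : Type*} {φ f : E → ℝ} {c : ℝ}
    (hc : IsLUB (Set.range fun x ↦ φ x - f x) c) (x : E) : φ x - c ≤ f x :=
  sub_le_comm.1 (hc.1 ⟨x, rfl⟩)

theorem sub_le_sInf_image_of_isMinOn {E : Type*} {X : Set E} {φ f : E → ℝ} {c : ℝ} {z : E}
    (hz : z ∈ X) (hmin : IsMinOn φ X z) (hf : ∀ x ∈ X, φ x - c ≤ f x) :
    φ z - c ≤ sInf (f '' X) :=
  le_csInf ⟨f z, z, hz, rfl⟩ <| Set.forall_mem_image.2 fun x hx ↦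
    (sub_le_sub_right (hmin hx) c).trans (hf x hx)

section DualApproach

-- `φ y x` is the pairing `⟨x, y⟩`; `δ p' p` replaces `D(p', p)`, as data need not be points of `E`.
variable {E F P ι : Type*} {X : Set E} {Y : Set F} {D : E → P → ℝ} {Dstar : F → P → ℝ}
  {δ : P → P → ℝ} {p : P} {L : ℝ} {s : Finset ι} {w : ι → ℝ} {q : ι → P} {z : ι → E}

theorem sum_mul_sub_conjugate_le {φ : F → E → ℝ} {y : ι → F}
    (hw : ∀ t ∈ s, 0 ≤ w t) (hw₁ : ∑ t ∈ s, w t = 1)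
    (hFY : ∀ y ∈ Y, ∀ p', ∀ x ∈ X, φ y x - Dstar y p' ≤ D x p')
    (hL : ∀ p', sInf ((D · p') '' X) - sInf ((D · p) '' X) ≤ L * δ p' p)
    (hy : ∀ t ∈ s, y t ∈ Y) (hz : ∀ t ∈ s, z t ∈ X ∧ IsMinOn (φ (y t)) X (z t)) :
    ∑ t ∈ s, w t * (φ (y t) (z t) - Dstar (y t) (q t)) ≤
      sInf ((D · p) '' X) + L * ∑ t ∈ s, w t * δ (q t) p := by
  have hround : ∀ t ∈ s, φ (y t) (z t) - Dstar (y t) (q t) ≤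
      sInf ((D · p) '' X) + L * δ (q t) p := fun t ht ↦
    (sub_le_sInf_image_of_isMinOn (hz t ht).1 (hz t ht).2 (hFY _ (hy t ht) _)).trans
      (sub_le_iff_le_add'.1 (hL (q t)))
  simpa only [← sum_mul, hw₁, one_mul] using sum_mul_le_sum_mul_add_mul_sum hw hround

variable [AddCommGroup E] [Module ℝ E] {φ : F → Module.Dual ℝ E}

theorem le_sSup_sum_mul_sub_conjugate_add
    (hw : ∀ t ∈ s, 0 ≤ w t) (hw₁ : ∑ t ∈ s, w t = 1)
    (hFY : ∀ y ∈ Y, ∀ p', ∀ x ∈ X, φ y x - Dstar y p' ≤ D x p')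
    (hbiconj : IsLUB ((fun y ↦ φ y (∑ t ∈ s, w t • z t) - Dstar y p) '' Y)
      (D (∑ t ∈ s, w t • z t) p))
    (hL : ∀ y ∈ Y, ∀ p', Dstar y p' - Dstar y p ≤ L * δ p' p) (hz : ∀ t ∈ s, z t ∈ X) :
    D (∑ t ∈ s, w t • z t) p ≤
      sSup ((fun y ↦ ∑ t ∈ s, w t * (φ y (z t) - Dstar y (q t))) '' Y) +
        L * ∑ t ∈ s, w t * δ (q t) p := by
  have hbdd : BddAbove ((fun y ↦ ∑ t ∈ s, w t * (φ y (z t) - Dstar y (q t))) '' Y) :=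
    bddAbove_image_sum_mul hw fun y hy t ht ↦ hFY y hy (q t) (z t) (hz t ht)
  refine hbiconj.2 (Set.forall_mem_image.2 fun y hy ↦ ?_)
  have hround : ∀ t ∈ s, φ y (z t) - Dstar y p ≤
      φ y (z t) - Dstar y (q t) + L * δ (q t) p := fun t _ ↦ by
    linarith [hL y hy (q t)]
  calc φ y (∑ t ∈ s, w t • z t) - Dstar y p
      = ∑ t ∈ s, w t * (φ y (z t) - Dstar y p) := dual_sum_smul_sub (φ y) z _ hw₁
    _ ≤ ∑ t ∈ s, w t * (φ y (z t) - Dstar y (q t)) + L * ∑ t ∈ s, w t * δ (q t) p :=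
        sum_mul_le_sum_mul_add_mul_sum hw hround
    _ ≤ _ := by
        gcongr
        exact le_csSup hbdd ⟨y, hy, rfl⟩

theorem dual_approach_error_bound_general (hX : Convex ℝ X)
    (hDstar : ∀ y ∈ Y, ∀ p', IsLUB (Set.range fun x ↦ φ y x - D x p') (Dstar y p'))
    (hbiconj : ∀ x ∈ X, IsLUB ((fun y ↦ φ y x - Dstar y p) '' Y) (D x p))
    {LD LDs : ℝ}
    (hLipmin : ∀ p', sInf ((D · p') '' X) - sInf ((D · p) '' X) ≤ LD * δ p' p)
    (hLipstar : ∀ y ∈ Y, ∀ p', Dstar y p' - Dstar y p ≤ LDs * δ p' p)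
    (hw : ∀ t ∈ s, 0 ≤ w t) (hw₁ : ∑ t ∈ s, w t = 1) {y : ι → F} (hy : ∀ t ∈ s, y t ∈ Y)
    (hz : ∀ t ∈ s, z t ∈ X ∧ IsMinOn (φ (y t)) X (z t)) :
    D (∑ t ∈ s, w t • z t) p - sInf ((D · p) '' X) ≤
      sSup ((fun y ↦ ∑ t ∈ s, w t * (φ y (z t) - Dstar y (q t))) '' Y) -
        ∑ t ∈ s, w t * (φ (y t) (z t) - Dstar (y t) (q t)) +
        (LD + LDs) * ∑ t ∈ s, w t * δ (q t) p := by
  have hzX : ∀ t ∈ s, z t ∈ X := fun t ht ↦ (hz t ht).1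
  have hFY : ∀ y ∈ Y, ∀ p', ∀ x ∈ X, φ y x - Dstar y p' ≤ D x p' :=
    fun y hy p' x _ ↦ fenchel_young (hDstar y hy p') x
  have hupper := le_sSup_sum_mul_sub_conjugate_add (q := q) hw hw₁ hFY
    (hbiconj _ (hX.sum_mem hw hw₁ hzX)) hLipstar hzX
  have hlower := sum_mul_sub_conjugate_le (q := q) hw hw₁ hFY hLipmin hy hz
  linarith

end DualApproach

/-- error bound for the dual (regret-minimization) approach
(Theorem 3 of the paper).  `nrm` is a norm on `ℝ^N`, `Y = {y : nrm y ≤ G}`,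
`Dstar (·, p')` is the convex conjugate of `D (·, p')` (captured on `Y` by `hDstar`),
assumption (i) is `hbiconj`, assumption (ii) is `hLipmin` and `hLipstar`, the dual
iterates are `yseq`, the associated primal points are `z t ∈ argmin_{z ∈ X} ⟨z, y^t⟩`,
and `xT` is their average. -/
theorem dual_approach_error_bound {N : ℕ}
    (X : Set (Fin N → ℝ)) (hXne : X.Nonempty) (hXconv : Convex ℝ X) (hXcomp : IsCompact X)
    (nrm : (Fin N → ℝ) → ℝ)
    (hnonneg : ∀ u, 0 ≤ nrm u)
    (hdefinite : ∀ u, nrm u = 0 → u = 0)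
    (hhom : ∀ (c : ℝ) (u : Fin N → ℝ), nrm (c • u) = |c| * nrm u)
    (htri : ∀ u v : Fin N → ℝ, nrm (u + v) ≤ nrm u + nrm v)
    (G : ℝ) (hG : 0 < G)
    (D : (Fin N → ℝ) → (Fin N → ℝ) → ℝ)
    (hDconv : ∀ p', ConvexOn ℝ Set.univ fun x => D x p')
    (Dstar : (Fin N → ℝ) → (Fin N → ℝ) → ℝ)
    (hDstar : ∀ y : Fin N → ℝ, nrm y ≤ G → ∀ p' : Fin N → ℝ,
      IsLUB {r : ℝ | ∃ z : Fin N → ℝ, r = y ⬝ᵥ z - D z p'} (Dstar y p'))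
    (p : Fin N → ℝ)
    -- assumption (i): D(x,p) = sup_{y ∈ Y} (⟨x,y⟩ - D_*(y,p)) on X
    (hbiconj : ∀ x ∈ X,
      IsLUB {r : ℝ | ∃ y : Fin N → ℝ, nrm y ≤ G ∧ r = x ⬝ᵥ y - Dstar y p} (D x p))
    -- assumption (ii): Lipschitz-type regularity
    (LD LDs : ℝ) (hLD : 0 ≤ LD) (hLDs : 0 ≤ LDs)
    (hLipmin : ∀ p' p'' : Fin N → ℝ,
      sInf {r : ℝ | ∃ x ∈ X, r = D x p'} - sInf {r : ℝ | ∃ x ∈ X, r = D x p''}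
        ≤ LD * D p' p'')
    (hLipstar : ∀ y : Fin N → ℝ, nrm y ≤ G → ∀ p' p'' : Fin N → ℝ,
      Dstar y p' - Dstar y p'' ≤ LDs * D p' p'')
    (T : ℕ) (hT : 1 ≤ T)
    (yseq pseq z : ℕ → Fin N → ℝ)
    (hy : ∀ t ∈ Finset.Icc 1 T, nrm (yseq t) ≤ G)
    (hz : ∀ t ∈ Finset.Icc 1 T, z t ∈ X ∧ ∀ w ∈ X, z t ⬝ᵥ yseq t ≤ w ⬝ᵥ yseq t)
    (xT : Fin N → ℝ) (hxT : xT = (1 / (T : ℝ)) • ∑ t ∈ Finset.Icc 1 T, z t) :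
    D xT p - sInf {r : ℝ | ∃ x ∈ X, r = D x p} ≤
      sSup {r : ℝ | ∃ y : Fin N → ℝ, nrm y ≤ G ∧
          r = (1 / (T : ℝ)) * ∑ t ∈ Finset.Icc 1 T, (z t ⬝ᵥ y - Dstar y (pseq t))}
        - (1 / (T : ℝ)) * ∑ t ∈ Finset.Icc 1 T, (z t ⬝ᵥ yseq t - Dstar (yseq t) (pseq t))
        + ((LD + LDs) / (T : ℝ)) * ∑ t ∈ Finset.Icc 1 T, D (pseq t) p := by
  have hTpos : (0 : ℝ) < T := by exact_mod_cast hT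
  have hw₁ : ∑ _t ∈ Icc 1 T, 1 / (T : ℝ) = 1 := by simp [hTpos.ne']
  have hconj : ∀ y, nrm y ≤ G → ∀ p',
      IsLUB (Set.range fun x ↦ x ⬝ᵥ y - D x p') (Dstar y p') := fun y hy p' ↦ by
    simpa only [Set.range, eq_comm, dotProduct_comm] using hDstar y hy p'
  simp only [setOf_exists_and_eq, Set.ofPred_mem_eq] at hbiconj hLipmin ⊢
  simpa only [hxT, smul_sum, mul_sum, div_eq_mul_one_div (LD + LDs), mul_assoc,
      LinearMap.flip_apply, dotProductBilin_apply_apply] using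
    dual_approach_error_bound_general (Y := {y | nrm y ≤ G}) (φ := (dotProductBilin ℝ ℝ).flip)
      (δ := D) (q := pseq) hXconv hconj hbiconj (hLipmin · p) (fun y hy ↦ (hLipstar y hy · p))
      (fun _ _ ↦ one_div_nonneg.2 hTpos.le) hw₁ hy hz
end
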